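/- Suppose α : ℕ → ℕ is such that there exist α₀, α₁ ∈ (0,1) with liminf_{n→∞} n^{−α₀}·α(n) = ∞ and limsup_{n→∞} n^{−α₁}·α(n) = 0. Then for every integer N ≥ 2, as n → ∞, v_{n,α} = (n/α(n))·∑_{k=2}^{N} (k!−1)/ξ(n/α(n))^k + o( (n/α(n))·ξ(n/α(n))^{−N} ); i.e. v_{n,α} has the asymptotic expansion (n/α(n))·∑_{k=2}^{∞} (k!−1)/ξ(n/α(n))^k. -/

import Mathlib

/-!
Put `g s = (exp s - 1) / s`, so that `ξ u` is the solution of `g ξ = u`, and `E s = ∫₀ˢ g`. Write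
the solution of `x + ⋯ + x ^ a = a * g ξ` as `x = exp w`. Comparing the geometric sum with its
continuous counterpart gives `a * g (a * w) ≤ ∑ exp w ^ j ≤ exp w * a * g (a * w)` for all `w ≥ 0`,
and integrating this in `w` gives `E (a * w) ≤ ∑ (exp w ^ j - 1) / j ≤ exp w * E (a * w)`. Since
`exp (-s / 2) * g s` increases, the first pair of inequalities forces `a * w ≤ ξ ≤ a * w + 2 * w`.
For `a = α n` and `ξ = ξ (n / α n) = O(log n)`, all of these discrepancies decay faster than any
power of `ξ`, so that, up to such errors, `v` divided by `u = n / α n` is `E ξ / g ξ - ξ / (ξ - 1)`.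
The first term expands as `∑ k! / ξ ^ k`, by comparing the derivatives of `E s` and of
`∑ k! * exp s / s ^ (k + 1)`, and the second as the geometric series `∑ 1 / ξ ^ k`.
-/

open Real Finset Filter Asymptotics intervalIntegral
open scoped Topology Nat

/-- The mean of `t ↦ exp (t * s)` over `[0, 1]`, that is `(exp s - 1) / s`, extended continuously by
`1` at `s = 0`.  The defining equation of `ξ u` reads `expSlope (ξ u) = u`. -/
noncomputable def expSlope : ℝ → ℝ := dslope exp 0

lemma expSlope_zero : expSlope 0 = 1 := by simp [expSlope]

lemma mul_expSlope (s : ℝ) : s * expSlope s = exp s - 1 := by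
  simpa [expSlope] using sub_smul_dslope exp 0 s

lemma expSlope_of_ne_zero {s : ℝ} (hs : s ≠ 0) : expSlope s = (exp s - 1) / s := by
  rw [← mul_expSlope, mul_div_cancel_left₀ _ hs]

@[fun_prop]
lemma continuous_expSlope : Continuous expSlope :=
  continuousOn_univ.mp <| (continuousOn_dslope univ_mem).mpr
    ⟨continuous_exp.continuousOn, differentiableAt_exp⟩

lemma monotoneOn_sinh_div_self : MonotoneOn (fun s => sinh s / s) (Set.Ioi 0) := by
  have convexOn_sinh : ConvexOn ℝ (Set.Ici 0) sinh := by
    refine MonotoneOn.convexOn_of_deriv (convex_Ici 0) continuous_sinh.continuousOn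
      differentiable_sinh.differentiableOn ?_
    rw [Real.deriv_sinh]
    exact cosh_strictMonoOn.monotoneOn.mono interior_subset
  intro s hs t ht hst
  simpa using convexOn_sinh.secant_mono Set.self_mem_Ici (Set.mem_Ici_of_Ioi hs)
    (Set.mem_Ici_of_Ioi ht) hs.ne' ht.ne' hst

lemma expSlope_eq_exp_half_mul {s : ℝ} (hs : s ≠ 0) :
    expSlope s = exp (s / 2) * (sinh (s / 2) / (s / 2)) := by
  have hexp : exp s = exp (s / 2) * exp (s / 2) := by rw [← exp_add, add_halves]
  rw [expSlope_of_ne_zero hs, sinh_eq, hexp, exp_neg]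
  field_simp

lemma exp_half_le_expSlope {s : ℝ} (hs : 0 ≤ s) : exp (s / 2) ≤ expSlope s := by
  obtain rfl | hs := hs.eq_or_lt
  · simp [expSlope_zero]
  · rw [expSlope_eq_exp_half_mul hs.ne']
    refine le_mul_of_one_le_right (exp_pos _).le ?_
    rw [one_le_div (half_pos hs), self_le_sinh_iff]
    positivity

-- Equivalently, `exp (-s / 2) * expSlope s = sinh (s / 2) / (s / 2)` increases.
lemma exp_half_sub_mul_expSlope_le {s t : ℝ} (hs : 0 ≤ s) (hst : s ≤ t) :
    exp ((t - s) / 2) * expSlope s ≤ expSlope t := by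
  obtain rfl | hs := hs.eq_or_lt
  · simpa [expSlope_zero] using exp_half_le_expSlope hst
  · have ht := hs.trans_le hst
    rw [expSlope_eq_exp_half_mul hs.ne', expSlope_eq_exp_half_mul ht.ne', ← mul_assoc,
      ← exp_add, show (t - s) / 2 + s / 2 = t / 2 by ring]
    exact mul_le_mul_of_nonneg_left (monotoneOn_sinh_div_self (half_pos hs) (half_pos ht)
      (by gcongr)) (exp_pos _).le

lemma one_le_expSlope {s : ℝ} (hs : 0 ≤ s) : 1 ≤ expSlope s :=
  (one_le_exp (by positivity)).trans (exp_half_le_expSlope hs)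

lemma strictMonoOn_expSlope : StrictMonoOn expSlope (Set.Ici 0) := fun s hs t _ hst =>
  (lt_mul_left (one_pos.trans_le (one_le_expSlope hs)) (one_lt_exp_iff.mpr (by linarith))).trans_le
    (exp_half_sub_mul_expSlope_le hs hst.le)

lemma expSlope_le_exp {s : ℝ} (hs : 0 ≤ s) : expSlope s ≤ exp s := by
  obtain rfl | hs := hs.eq_or_lt
  · simp [expSlope_zero]
  · rw [expSlope_of_ne_zero hs.ne', div_le_iff₀ hs]
    have h := mul_le_mul_of_nonneg_left (one_sub_le_exp_neg s) (exp_pos s).le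
    rw [← exp_add, add_neg_cancel, exp_zero] at h
    linarith

lemma pos_and_expSlope_eq {u ξ : ℝ} (hu : 1 < u) (hξ : ξ ≠ 0) (h : exp ξ = 1 + u * ξ) :
    0 < ξ ∧ expSlope ξ = u := by
  have hexp := add_one_lt_exp hξ
  refine ⟨pos_of_mul_pos_right (a := u - 1) (by linarith) (by linarith), ?_⟩
  rw [expSlope_of_ne_zero hξ, h]
  field_simp
  ring

/-- The entire exponential integral `∫₀ˢ (exp y - 1) / y dy`. -/
noncomputable def expIntegral (s : ℝ) : ℝ := ∫ y in 0..s, expSlope y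

lemma hasDerivAt_expIntegral (s : ℝ) : HasDerivAt expIntegral (expSlope s) s :=
  (continuous_expSlope.integral_hasStrictDerivAt 0 s).hasDerivAt

lemma expIntegral_nonneg {s : ℝ} (hs : 0 ≤ s) : 0 ≤ expIntegral s :=
  integral_nonneg hs fun _ hy => zero_le_one.trans (one_le_expSlope hy.1)

lemma expIntegral_sub_le {s t : ℝ} (hs : 0 ≤ s) (hst : s ≤ t) :
    expIntegral t - expIntegral s ≤ (t - s) * expSlope t := by
  have hint (s t : ℝ) := continuous_expSlope.intervalIntegrable s t (μ := MeasureTheory.volume)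
  rw [expIntegral, expIntegral, integral_interval_sub_left (hint 0 t) (hint 0 s)]
  calc ∫ y in s..t, expSlope y ≤ ∫ _ in s..t, expSlope t :=
        integral_mono_on hst (hint s t) intervalIntegrable_const fun y hy =>
          strictMonoOn_expSlope.monotoneOn (hs.trans hy.1) (hs.trans hst) hy.2
    _ = (t - s) * expSlope t := by simp

lemma monotoneOn_expIntegral : MonotoneOn expIntegral (Set.Ici 0) :=
  monotoneOn_of_hasDerivWithinAt_nonneg (convex_Ici 0)
    (fun s _ => (hasDerivAt_expIntegral s).continuousAt.continuousWithinAt)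
    (fun s _ => (hasDerivAt_expIntegral s).hasDerivWithinAt)
    fun _ hs => zero_le_one.trans (one_le_expSlope (interior_subset hs))

lemma isLittleO_of_deriv_isLittleO {E : Type*} [NormedAddCommGroup E] [NormedSpace ℝ E]
    {f f' : ℝ → E} {g g' : ℝ → ℝ}
    (hf : ∀ᶠ s in atTop, HasDerivAt f (f' s) s) (hg : ∀ᶠ s in atTop, HasDerivAt g (g' s) s)
    (hg' : ∀ᶠ s in atTop, 0 ≤ g' s) (h : f' =o[atTop] g') (hg_top : Tendsto g atTop atTop) :
    f =o[atTop] g := by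
  refine isLittleO_iff.mpr fun c hc => ?_
  obtain ⟨s₀, hs₀⟩ := eventually_atTop.mp
    (hf.and <| hg.and <| hg'.and <| h.bound (half_pos hc))
  have hB (t : ℝ) (ht : s₀ ≤ t) : HasDerivAt (fun s => ‖f s₀‖ + c / 2 * (g s - g s₀))
      (c / 2 * g' t) t :=
    (((hs₀ t ht).2.1.sub_const _).const_mul _).const_add _
  have hbound : ∀ s ≥ s₀, ‖f s‖ ≤ ‖f s₀‖ + c / 2 * (g s - g s₀) := fun s hs => by
    refine image_norm_le_of_norm_deriv_right_le_deriv_boundary' (f' := f')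
      (B := fun s => ‖f s₀‖ + c / 2 * (g s - g s₀)) (B' := fun s => c / 2 * g' s)
      (fun t ht => (hs₀ t ht.1).1.continuousAt.continuousWithinAt)
      (fun t ht => (hs₀ t ht.1).1.hasDerivWithinAt) (by simp)
      (fun t ht => ?_) (fun t ht => ?_) (fun t ht => ?_) ⟨hs, le_rfl⟩
    · exact (hB t ht.1).continuousAt.continuousWithinAt
    · exact (hB t ht.1).hasDerivWithinAt
    · obtain ⟨-, -, hnonneg, hle⟩ := hs₀ t ht.1
      rwa [norm_of_nonneg hnonneg] at hle
  have hlarge := hg_top.eventually_ge_atTop (2 / c * (‖f s₀‖ - c / 2 * g s₀))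
  filter_upwards [eventually_ge_atTop s₀, hlarge, hg_top.eventually_ge_atTop 0] with s hs hgs hgs0
  rw [norm_of_nonneg hgs0]
  refine (hbound s hs).trans ?_
  rw [div_mul_eq_mul_div, div_le_iff₀ hc] at hgs
  linarith

lemma hasDerivAt_exp_div_pow (n : ℕ) {s : ℝ} (hs : s ≠ 0) :
    HasDerivAt (fun s => exp s / s ^ n) (exp s / s ^ n - n * (exp s / s ^ (n + 1))) s := by
  refine ((hasDerivAt_exp s).div (hasDerivAt_pow n s) (pow_ne_zero n hs)).congr_deriv ?_
  cases n with
  | zero => simp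
  | succ n =>
    push_cast
    field_simp
    ring

lemma hasDerivAt_exp_mul_sum_factorial_div_pow (N : ℕ) {s : ℝ} (hs : s ≠ 0) :
    HasDerivAt (fun s => ∑ k ∈ range N, (k ! : ℝ) * (exp s / s ^ (k + 1)))
      (exp s / s - N ! * (exp s / s ^ (N + 1))) s := by
  refine (HasDerivAt.fun_sum fun k _ =>
    (hasDerivAt_exp_div_pow (k + 1) hs).const_mul (k ! : ℝ)).congr_deriv ?_
  induction N with
  | zero => simp
  | succ N ih =>
    rw [sum_range_succ, ih, Nat.factorial_succ]
    push_cast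
    ring

lemma exp_div_pow_succ_isLittleO (n : ℕ) :
    (fun s : ℝ => exp s / s ^ (n + 1)) =o[atTop] fun s => exp s / s ^ n := by
  have h := (isBigO_refl (fun s : ℝ => exp s / s ^ n) atTop).mul_isLittleO
    ((isLittleO_one_iff ℝ).mpr tendsto_inv_atTop_zero)
  simpa only [mul_one, ← div_eq_mul_inv, div_div, ← pow_succ] using h

lemma one_isLittleO_exp_div_pow (n : ℕ) :
    (fun _ : ℝ => (1 : ℝ)) =o[atTop] fun s => exp s / s ^ n :=
  (isLittleO_one_left_iff ℝ).mpr
    (tendsto_norm_atTop_atTop.comp (tendsto_exp_div_pow_atTop n))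

lemma inv_isLittleO_exp_div_pow (n : ℕ) :
    (fun s : ℝ => s⁻¹) =o[atTop] fun s => exp s / s ^ n :=
  (tendsto_inv_atTop_zero.isBigO_one ℝ).trans_isLittleO (one_isLittleO_exp_div_pow n)

lemma expIntegral_sub_sum_isLittleO (N : ℕ) :
    (fun s => expIntegral s - ∑ k ∈ range (N + 1), (k ! : ℝ) * (exp s / s ^ (k + 1)))
      =o[atTop] fun s => exp s / s ^ (N + 1) := by
  have hne : ∀ᶠ s : ℝ in atTop, s ≠ 0 := eventually_ne_atTop 0
  have hsub := (exp_div_pow_succ_isLittleO (N + 1)).const_mul_left (N + 1 : ℝ)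
  refine isLittleO_of_deriv_isLittleO
    (hne.mono fun s hs => (hasDerivAt_expIntegral s).sub
      (hasDerivAt_exp_mul_sum_factorial_div_pow (N + 1) hs))
    (hne.mono fun s hs => hasDerivAt_exp_div_pow (N + 1) hs) ?_ ?_
    (tendsto_exp_div_pow_atTop (N + 1))
  · filter_upwards [eventually_ge_atTop (N + 1 : ℝ)] with s hs
    have hs0 : 0 < s := by linarith [(N.cast_nonneg : (0 : ℝ) ≤ N)]
    rw [sub_nonneg, pow_succ _ (N + 1), ← div_div, ← mul_div_assoc, div_le_iff₀ hs0, mul_comm]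
    push_cast
    gcongr
  · refine IsLittleO.trans_isBigO (g := fun s => exp s / s ^ (N + 1)) ?_ ?_
    · refine (((exp_div_pow_succ_isLittleO (N + 1)).const_mul_left ((N + 1)! : ℝ)).sub
        (inv_isLittleO_exp_div_pow (N + 1))).congr' ?_ .rfl
      filter_upwards [hne] with s hs
      rw [expSlope_of_ne_zero hs]
      ring
    · exact_mod_cast hsub.right_isBigO_sub

lemma exp_div_pow_succ_isBigO (N : ℕ) :
    (fun s => exp s / s ^ (N + 1)) =O[atTop] fun s => expSlope s * (1 / s ^ N) := by
  refine .of_bound 2 ?_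
  filter_upwards [eventually_ge_atTop 1] with s hs
  have hexp : exp s ≤ 2 * (s * expSlope s) := by
    rw [mul_expSlope]
    linarith [add_one_le_exp s]
  have hslope : 0 ≤ expSlope s := zero_le_one.trans (one_le_expSlope (by linarith))
  rw [norm_of_nonneg (by positivity), norm_of_nonneg (by positivity)]
  calc exp s / s ^ (N + 1) ≤ 2 * (s * expSlope s) / s ^ (N + 1) := by gcongr
    _ = 2 * (expSlope s * (1 / s ^ N)) := by field_simp; ring

lemma sum_factorial_div_pow_succ_isLittleO (n N : ℕ) :
    (fun s : ℝ => ∑ k ∈ range N, (k ! : ℝ) / s ^ (k + 1)) =o[atTop] fun s => exp s / s ^ n := by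
  have hzero (k : ℕ) : Tendsto (fun s : ℝ => (k ! : ℝ) / s ^ (k + 1)) atTop (𝓝 0) :=
    tendsto_const_nhds.div_atTop (tendsto_pow_atTop k.succ_ne_zero)
  exact .fun_sum fun k _ => ((hzero k).isBigO_one ℝ).trans_isLittleO (one_isLittleO_exp_div_pow n)

theorem expIntegral_div_expSlope_sub_isLittleO (N : ℕ) :
    (fun s => expIntegral s / expSlope s - ∑ k ∈ range (N + 1), (k ! : ℝ) / s ^ k)
      =o[atTop] fun s => 1 / s ^ N := by
  have hnum := ((expIntegral_sub_sum_isLittleO N).add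
    (sum_factorial_div_pow_succ_isLittleO (N + 1) (N + 1))).trans_isBigO (exp_div_pow_succ_isBigO N)
  have hne : ∀ᶠ s in atTop, 0 < s ∧ expSlope s ≠ 0 := by
    filter_upwards [eventually_gt_atTop 0] with s hs
    exact ⟨hs, (one_pos.trans_le (one_le_expSlope hs.le)).ne'⟩
  refine ((isBigO_refl (fun s => (expSlope s)⁻¹) atTop).mul_isLittleO hnum).congr' ?_ ?_
  · filter_upwards [hne] with s ⟨hs, hslope⟩
    have hsum : expSlope s * ∑ k ∈ range (N + 1), (k ! : ℝ) / s ^ k =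
        ∑ k ∈ range (N + 1), ((k ! : ℝ) * (exp s / s ^ (k + 1)) - (k ! : ℝ) / s ^ (k + 1)) := by
      rw [expSlope_of_ne_zero hs.ne', mul_sum]
      refine sum_congr rfl fun k _ => ?_
      field_simp
      ring
    rw [inv_mul_eq_iff_eq_mul₀ hslope, mul_sub, mul_div_cancel₀ _ hslope, hsum, sum_sub_distrib]
    ring
  · filter_upwards [hne] with s ⟨_, hslope⟩
    field_simp

lemma sum_Icc_pow_mul_sub_one (a : ℕ) (x : ℝ) :
    (∑ j ∈ Icc 1 a, x ^ j) * (x - 1) = x * (x ^ a - 1) := by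
  induction a with
  | zero => simp
  | succ a ih =>
    rw [sum_Icc_succ_top (by omega), add_mul, ih]
    ring

lemma sum_exp_pow_mul_expSlope (a : ℕ) (w : ℝ) :
    (∑ j ∈ Icc 1 a, exp w ^ j) * expSlope w = exp w * (a * expSlope (a * w)) := by
  obtain rfl | hw := eq_or_ne w 0
  · simp [expSlope_zero]
  · have hgeom := sum_Icc_pow_mul_sub_one a (exp w)
    rw [← exp_nat_mul, ← mul_expSlope, ← mul_expSlope] at hgeom
    refine mul_left_cancel₀ hw ?_
    linear_combination hgeom

lemma mul_expSlope_le_sum_exp_pow (a : ℕ) {w : ℝ} (hw : 0 ≤ w) :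
    a * expSlope (a * w) ≤ ∑ j ∈ Icc 1 a, exp w ^ j := by
  have hslope := one_le_expSlope hw
  have hslope' := one_le_expSlope (s := a * w) (by positivity)
  refine le_of_mul_le_mul_right ?_ (one_pos.trans_le hslope)
  rw [sum_exp_pow_mul_expSlope, mul_comm]
  gcongr
  exact expSlope_le_exp hw

lemma sum_exp_pow_le_mul_expSlope (a : ℕ) {w : ℝ} (hw : 0 ≤ w) :
    ∑ j ∈ Icc 1 a, exp w ^ j ≤ exp w * (a * expSlope (a * w)) := by
  rw [← sum_exp_pow_mul_expSlope]
  exact le_mul_of_one_le_right (by positivity) (one_le_expSlope hw)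

lemma integral_sum_exp_pow (a : ℕ) (w : ℝ) :
    ∫ v in 0..w, ∑ j ∈ Icc 1 a, exp v ^ j = ∑ j ∈ Icc 1 a, (exp w ^ j - 1) / j := by
  rw [intervalIntegral.integral_finsetSum fun j _ =>
    (by fun_prop : Continuous fun v => exp v ^ j).intervalIntegrable _ _]
  refine sum_congr rfl fun j hj => ?_
  have hj0 : (j : ℝ) ≠ 0 := Nat.cast_ne_zero.mpr (Nat.ne_zero_of_lt (mem_Icc.mp hj).1)
  simp only [← exp_nat_mul]
  rw [integral_comp_mul_left _ hj0, integral_exp]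
  simp [div_eq_inv_mul]

lemma integral_mul_expSlope (a : ℕ) (w : ℝ) :
    ∫ v in 0..w, a * expSlope (a * v) = expIntegral (a * w) := by
  rw [integral_const_mul, mul_integral_comp_mul_left, mul_zero, expIntegral]

lemma expIntegral_le_sum_div (a : ℕ) {w : ℝ} (hw : 0 ≤ w) :
    expIntegral (a * w) ≤ ∑ j ∈ Icc 1 a, (exp w ^ j - 1) / j := by
  rw [← integral_sum_exp_pow, ← integral_mul_expSlope]
  exact integral_mono_on hw (Continuous.intervalIntegrable (by fun_prop) _ _)
    (Continuous.intervalIntegrable (by fun_prop) _ _)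
    fun v hv => mul_expSlope_le_sum_exp_pow a hv.1

lemma sum_div_le_exp_mul_expIntegral (a : ℕ) {w : ℝ} (hw : 0 ≤ w) :
    ∑ j ∈ Icc 1 a, (exp w ^ j - 1) / j ≤ exp w * expIntegral (a * w) := by
  rw [← integral_sum_exp_pow, ← integral_mul_expSlope, ← integral_const_mul]
  refine integral_mono_on hw (Continuous.intervalIntegrable (by fun_prop) _ _)
    (Continuous.intervalIntegrable (by fun_prop) _ _)
    fun v hv => (sum_exp_pow_le_mul_expSlope a hv.1).trans ?_
  have hpos := one_le_expSlope (mul_nonneg a.cast_nonneg hv.1)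
  gcongr
  exact hv.2

/-- The relative error of replacing sums over the mesh `j / a`, `1 ≤ j ≤ a`, by integrals over
`[0, 1]`: with `x` the solution of `x + ⋯ + x ^ a = a * expSlope ξ`, it bounds the distance between
`a * (x - 1)` and `ξ` and, up to the factor `expSlope ξ`, that between `∑ (x ^ j - 1) / j` and
`expIntegral ξ`. -/
noncomputable def meshError (a : ℕ) (ξ : ℝ) : ℝ := (exp (ξ / a) - 1) * (ξ + 2)

section Saddle

variable {a : ℕ} {w ξ : ℝ}

lemma mul_le_of_sum_eq (ha : a ≠ 0) (hw : 0 ≤ w) (hξ : 0 ≤ ξ)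
    (h : ∑ j ∈ Icc 1 a, exp w ^ j = a * expSlope ξ) : a * w ≤ ξ := by
  have hle := h ▸ mul_expSlope_le_sum_exp_pow a hw
  exact (strictMonoOn_expSlope.le_iff_le (mul_nonneg a.cast_nonneg hw) hξ).mp
    (le_of_mul_le_mul_left hle (by positivity))

lemma le_mul_add_of_sum_eq (ha : a ≠ 0) (hw : 0 ≤ w) (hξ : 0 ≤ ξ)
    (h : ∑ j ∈ Icc 1 a, exp w ^ j = a * expSlope ξ) : ξ ≤ a * w + 2 * w := by
  have haw : 0 ≤ a * w := by positivity
  have hgrowth := exp_half_sub_mul_expSlope_le haw (mul_le_of_sum_eq ha hw hξ h)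
  have hle := h ▸ sum_exp_pow_le_mul_expSlope a hw
  rw [mul_left_comm] at hle
  have hexp := le_of_mul_le_mul_right (hgrowth.trans (le_of_mul_le_mul_left hle (by positivity)))
    (one_pos.trans_le (one_le_expSlope haw))
  linarith [exp_le_exp.mp hexp]

lemma exp_le_exp_div_of_sum_eq (ha : a ≠ 0) (hw : 0 ≤ w) (hξ : 0 ≤ ξ)
    (h : ∑ j ∈ Icc 1 a, exp w ^ j = a * expSlope ξ) : exp w ≤ exp (ξ / a) := by
  gcongr
  rw [le_div_iff₀' (by positivity)]
  exact mul_le_of_sum_eq ha hw hξ h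

lemma abs_mul_exp_sub_one_sub_le (ha : a ≠ 0) (hw : 0 ≤ w) (hξ : 0 ≤ ξ)
    (h : ∑ j ∈ Icc 1 a, exp w ^ j = a * expSlope ξ) :
    |a * (exp w - 1) - ξ| ≤ meshError a ξ := by
  have hupper := mul_le_of_sum_eq ha hw hξ h
  have hlower := le_mul_add_of_sum_eq ha hw hξ h
  have hδ := sub_le_sub_right (exp_le_exp_div_of_sum_eq ha hw hξ h) 1
  have hw_le := add_one_le_exp w
  have hslope : exp w - 1 ≤ w * exp w := by
    rw [← mul_expSlope]
    gcongr
    exact expSlope_le_exp hw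
  rw [meshError, abs_le]
  constructor
  · have : a * w ≤ a * (exp w - 1) := by gcongr; linarith
    nlinarith
  · have : a * (exp w - 1) ≤ a * (w * exp w) := by gcongr
    have : a * w * (exp w - 1) ≤ ξ * (exp (ξ / a) - 1) := by gcongr; linarith
    nlinarith

lemma abs_sum_div_sub_expIntegral_le (ha : a ≠ 0) (hw : 0 ≤ w) (hξ : 0 ≤ ξ)
    (h : ∑ j ∈ Icc 1 a, exp w ^ j = a * expSlope ξ) :
    |∑ j ∈ Icc 1 a, (exp w ^ j - 1) / j - expIntegral ξ| ≤ meshError a ξ * expSlope ξ := by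
  have haw : 0 ≤ a * w := by positivity
  have hupper := mul_le_of_sum_eq ha hw hξ h
  have hlower := le_mul_add_of_sum_eq ha hw hξ h
  have hδ := sub_le_sub_right (exp_le_exp_div_of_sum_eq ha hw hξ h) 1
  have hw_le := add_one_le_exp w
  have hslope := one_le_expSlope hξ
  rw [meshError, abs_le]
  constructor
  · have hdiff : expIntegral ξ - expIntegral (a * w) ≤ 2 * (exp (ξ / a) - 1) * expSlope ξ :=
      (expIntegral_sub_le haw hupper).trans (by gcongr; linarith)
    have : 0 ≤ (exp (ξ / a) - 1) * ξ * expSlope ξ := by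
      have : 0 ≤ exp (ξ / a) - 1 := by linarith
      positivity
    linarith [expIntegral_le_sum_div a hw]
  · have hint : expIntegral ξ ≤ ξ * expSlope ξ := by
      simpa [expIntegral] using expIntegral_sub_le le_rfl hξ
    have hmono : exp w * expIntegral (a * w) ≤ exp w * expIntegral ξ := by
      gcongr
      exact monotoneOn_expIntegral haw hξ hupper
    have : (exp w - 1) * expIntegral ξ ≤ (exp (ξ / a) - 1) * (ξ * expSlope ξ) :=
      mul_le_mul hδ hint (expIntegral_nonneg hξ) (by linarith)
    nlinarith [sum_div_le_exp_mul_expIntegral a hw]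

end Saddle

lemma sum_one_div_le_one_add_log (a : ℕ) : ∑ j ∈ Icc 1 a, (1 : ℝ) / j ≤ 1 + log a := by
  simpa [harmonic_eq_sum_Icc] using harmonic_le_one_add_log a

lemma abs_sum_pow_div_sub_le {a : ℕ} {x ξ : ℝ} (ha : a ≠ 0) (hx : 1 ≤ x) (hξ : 0 ≤ ξ)
    (h : ∑ j ∈ Icc 1 a, x ^ j = a * expSlope ξ) :
    |(∑ j ∈ Icc 1 a, x ^ j / j) / expSlope ξ - expIntegral ξ / expSlope ξ| ≤
      meshError a ξ + (1 + log a) / expSlope ξ := by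
  have hpos := one_pos.trans_le (one_le_expSlope hξ)
  have hx0 := exp_log (one_pos.trans_le hx)
  have hmesh := abs_sum_div_sub_expIntegral_le ha (log_nonneg hx) hξ (by rwa [hx0])
  have hharm : |∑ j ∈ Icc 1 a, (1 : ℝ) / j| ≤ 1 + log a := by
    rw [abs_of_nonneg (by positivity)]
    exact sum_one_div_le_one_add_log a
  rw [hx0] at hmesh
  have hsplit : ∑ j ∈ Icc 1 a, x ^ j / j - expIntegral ξ =
      (∑ j ∈ Icc 1 a, (x ^ j - 1) / j - expIntegral ξ) + ∑ j ∈ Icc 1 a, (1 : ℝ) / j := by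
    simp only [sub_div, sum_sub_distrib]
    ring
  rw [← sub_div, abs_div, abs_of_pos hpos, div_le_iff₀ hpos, add_mul, div_mul_cancel₀ _ hpos.ne',
    hsplit]
  exact (abs_add_le _ _).trans (add_le_add hmesh hharm)

section SuperpolynomialDecay

variable {ι : Type*} {l : Filter ι}

lemma superpolynomialDecay_of_isBigO {k k' f g : ι → ℝ} (hf : SuperpolynomialDecay l k f)
    (hk : k' =O[l] k) (hg : g =O[l] f) : SuperpolynomialDecay l k' g :=
  fun n => ((hk.pow n).mul hg).trans_tendsto (hf n)

lemma isLittleO_one_div_pow_of_superpolynomialDecay {k f : ι → ℝ} (hk : Tendsto k l atTop)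
    (hf : SuperpolynomialDecay l k f) (N : ℕ) : f =o[l] fun n => 1 / k n ^ N := by
  simpa using (superpolynomialDecay_iff_isLittleO f hk).mp hf (-N)

lemma superpolynomialDecay_log_rpow_neg {c : ℝ} (hc : 0 < c) :
    SuperpolynomialDecay atTop (fun n : ℕ => log n) fun n => (n : ℝ) ^ (-c) := fun k => by
  have h := (isLittleO_log_rpow_rpow_atTop k hc).tendsto_div_nhds_zero.comp
    tendsto_natCast_atTop_atTop
  refine h.congr fun n => ?_
  simp [rpow_neg, div_eq_mul_inv]

lemma superpolynomialDecay_meshError {a : ι → ℕ} {ξ : ι → ℝ} (hξ : Tendsto ξ l atTop)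
    (ha : SuperpolynomialDecay l ξ fun n => (a n : ℝ)⁻¹) :
    SuperpolynomialDecay l ξ fun n => meshError (a n) (ξ n) := by
  have hmesh : Tendsto (fun n => ξ n / a n) l (𝓝 0) := by
    simpa [div_eq_mul_inv] using ha 1
  have hexp : (fun n => exp (ξ n / a n) - 1) =O[l] fun n => ξ n / a n := by
    simpa [Function.comp_def] using (hasDerivAt_exp 0).isBigO_sub.comp_tendsto hmesh
  have hadd : (fun n => ξ n + 2) =O[l] ξ :=
    (isBigO_refl ξ l).add (isLittleO_const_left_of_ne two_ne_zero |>.mpr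
      (tendsto_norm_atTop_atTop.comp hξ)).isBigO
  refine superpolynomialDecay_of_isBigO ha.param_mul.mul_param (isBigO_refl ξ l) ?_
  exact hexp.mul hadd

end SuperpolynomialDecay

section Expansion

variable {ι : Type*} {l : Filter ι} {a : ι → ℕ} {x ξ : ι → ℝ}

lemma sum_one_div_pow {y : ℝ} (hy : y ≠ 0) (hy1 : y ≠ 1) (N : ℕ) :
    ∑ k ∈ range (N + 1), 1 / y ^ k = y / (y - 1) - 1 / y ^ N * (y - 1)⁻¹ := by
  have hsub : y - 1 ≠ 0 := sub_ne_zero.mpr hy1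
  induction N with
  | zero =>
    field_simp
    simp
  | succ N ih =>
    rw [sum_range_succ, ih]
    field_simp
    ring

lemma div_sub_one_add_sub_sum_isLittleO {t e : ι → ℝ} (hξ : Tendsto ξ l atTop)
    (ht : SuperpolynomialDecay l ξ fun n => t n - ξ n) (he : SuperpolynomialDecay l ξ e) (N : ℕ) :
    (fun n => t n / (t n - 1 + e n) - ∑ k ∈ range (N + 1), 1 / ξ n ^ k)
      =o[l] fun n => 1 / ξ n ^ N := by
  have hdecay : SuperpolynomialDecay l ξ fun n => (t n - ξ n) + ξ n * e n := ht.add he.param_mul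
  have hsmall := isLittleO_one_div_pow_of_superpolynomialDecay hξ hdecay N
  have hden : ∀ᶠ n in l, 1 ≤ t n - 1 + e n := by
    have hdev : Tendsto (fun n => t n - ξ n + e n) l (𝓝 0) := by simpa using (ht 0).add (he 0)
    filter_upwards [(hξ.atTop_add hdev).eventually_ge_atTop 2] with n hn
    linarith
  have htail : (fun n => 1 / ξ n ^ N * (ξ n - 1)⁻¹) =o[l] fun n => 1 / ξ n ^ N := by
    have hinv : Tendsto (fun n => (ξ n - 1)⁻¹) l (𝓝 0) :=
      (tendsto_atTop_add_const_right l (-1) hξ).inv_tendsto_atTop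
    simpa using (isBigO_refl (fun n => 1 / ξ n ^ N) l).mul_isLittleO
      ((isLittleO_one_iff ℝ).mpr hinv)
  have hmain : (fun n => ((t n - ξ n) + ξ n * e n) * ((t n - 1 + e n)⁻¹ * (ξ n - 1)⁻¹))
      =o[l] fun n => 1 / ξ n ^ N := by
    refine IsBigO.trans_isLittleO (.of_bound' ?_) hsmall
    filter_upwards [hden, hξ.eventually_ge_atTop 2] with n hn hξn
    rw [norm_mul]
    refine mul_le_of_le_one_right (norm_nonneg _) ?_
    rw [norm_of_nonneg (mul_nonneg (by positivity) (inv_nonneg.mpr (by linarith)))]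
    exact mul_le_one₀ (inv_le_one_of_one_le₀ hn) (inv_nonneg.mpr (by linarith))
      (inv_le_one_of_one_le₀ (by linarith))
  refine (htail.sub hmain).congr' ?_ .rfl
  filter_upwards [hden, hξ.eventually_ge_atTop 2] with n hn hξn
  have hξ1 : ξ n - 1 ≠ 0 := by linarith
  have hden0 : t n - 1 + e n ≠ 0 := by linarith
  rw [sum_one_div_pow (by linarith) (sub_ne_zero.mp hξ1)]
  field_simp
  ring

lemma sum_pow_div_sub_sum_isLittleO (hξ : Tendsto ξ l atTop)
    (ha : SuperpolynomialDecay l ξ fun n => (a n : ℝ)⁻¹)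
    (hlog : SuperpolynomialDecay l ξ fun n => (1 + log (a n)) / expSlope (ξ n))
    (hx : ∀ᶠ n in l, a n ≠ 0 ∧ 1 ≤ x n ∧ ∑ j ∈ Icc 1 (a n), x n ^ j = a n * expSlope (ξ n))
    (N : ℕ) :
    (fun n => (∑ j ∈ Icc 1 (a n), x n ^ j / j) / expSlope (ξ n)
      - ∑ k ∈ range (N + 1), (k ! : ℝ) / ξ n ^ k) =o[l] fun n => 1 / ξ n ^ N := by
  have hmesh : SuperpolynomialDecay l ξ fun n =>
      meshError (a n) (ξ n) + (1 + log (a n)) / expSlope (ξ n) :=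
    (superpolynomialDecay_meshError hξ ha).add hlog
  have hdiff : (fun n => (∑ j ∈ Icc 1 (a n), x n ^ j / j) / expSlope (ξ n)
      - expIntegral (ξ n) / expSlope (ξ n)) =O[l] fun n =>
      meshError (a n) (ξ n) + (1 + log (a n)) / expSlope (ξ n) := by
    refine .of_bound' ?_
    filter_upwards [hx, hξ.eventually_ge_atTop 0] with n ⟨han, hxn, hsum⟩ hξn
    exact (abs_sum_pow_div_sub_le han hxn hξn hsum).trans (le_abs_self _)
  simpa using (hdiff.trans_isLittleO
    (isLittleO_one_div_pow_of_superpolynomialDecay hξ hmesh N)).add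
    ((expIntegral_div_expSlope_sub_isLittleO N).comp_tendsto hξ)

lemma superpolynomialDecay_mul_sub_one_sub (hξ : Tendsto ξ l atTop)
    (ha : SuperpolynomialDecay l ξ fun n => (a n : ℝ)⁻¹)
    (hx : ∀ᶠ n in l, a n ≠ 0 ∧ 1 ≤ x n ∧ ∑ j ∈ Icc 1 (a n), x n ^ j = a n * expSlope (ξ n)) :
    SuperpolynomialDecay l ξ fun n => a n * (x n - 1) - ξ n := by
  refine superpolynomialDecay_of_isBigO (superpolynomialDecay_meshError hξ ha) (isBigO_refl ξ l)
    (.of_bound' ?_)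
  filter_upwards [hx, hξ.eventually_ge_atTop 0] with n ⟨han, hxn, hsum⟩ hξn
  have hx0 := exp_log (one_pos.trans_le hxn)
  have hmesh := abs_mul_exp_sub_one_sub_le han (log_nonneg hxn) hξn (by rwa [hx0])
  rw [hx0] at hmesh
  exact hmesh.trans (le_abs_self _)

lemma superpolynomialDecay_div_expSlope (hξ : Tendsto ξ l atTop)
    (ha : SuperpolynomialDecay l ξ fun n => (a n : ℝ)⁻¹)
    (hlog : SuperpolynomialDecay l ξ fun n => (1 + log (a n)) / expSlope (ξ n))
    (hx : ∀ᶠ n in l, a n ≠ 0 ∧ 1 ≤ x n ∧ ∑ j ∈ Icc 1 (a n), x n ^ j = a n * expSlope (ξ n)) :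
    SuperpolynomialDecay l ξ fun n => x n / expSlope (ξ n) := by
  have hmesh : Tendsto (fun n => ξ n / a n) l (𝓝 0) := by
    simpa [div_eq_mul_inv] using ha 1
  have hbound : (fun n => exp (ξ n / a n)) =O[l] fun _ => (1 : ℝ) :=
    ((continuous_exp.tendsto 0).comp hmesh).isBigO_one ℝ
  have hdecay : SuperpolynomialDecay l ξ fun n =>
      exp (ξ n / a n) * ((1 + log (a n)) / expSlope (ξ n)) :=
    superpolynomialDecay_of_isBigO hlog (isBigO_refl ξ l)
      (by simpa using hbound.mul (isBigO_refl (fun n => (1 + log (a n)) / expSlope (ξ n)) l))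
  refine superpolynomialDecay_of_isBigO hdecay (isBigO_refl ξ l) (.of_bound' ?_)
  filter_upwards [hx, hξ.eventually_ge_atTop 0] with n ⟨han, hxn, hsum⟩ hξn
  have hx0 := exp_log (one_pos.trans_le hxn)
  have hle := exp_le_exp_div_of_sum_eq han (log_nonneg hxn) hξn (by rwa [hx0])
  rw [hx0] at hle
  have hpos := one_pos.trans_le (one_le_expSlope hξn)
  have hlogn := log_natCast_nonneg (a n)
  rw [norm_of_nonneg (by positivity), norm_of_nonneg (by positivity), mul_div_assoc']
  gcongr
  exact hle.trans (le_mul_of_one_le_right (exp_pos _).le (by linarith))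

lemma sum_Icc_two_factorial_sub_one_div_pow (y : ℝ) (N : ℕ) :
    ∑ k ∈ Icc 2 N, ((k ! : ℝ) - 1) / y ^ k =
      ∑ k ∈ range (N + 1), (k ! : ℝ) / y ^ k - ∑ k ∈ range (N + 1), 1 / y ^ k := by
  simp only [← sum_sub_distrib, ← sub_div]
  refine sum_subset (fun k hk => mem_range_succ_iff.mpr (mem_Icc.mp hk).2) fun k hk hk' => ?_
  rw [mem_range] at hk
  rw [mem_Icc] at hk'
  obtain rfl | rfl : k = 0 ∨ k = 1 := by omega
  all_goals simp

theorem sum_pow_div_sub_div_sub_sum_isLittleO (hξ : Tendsto ξ l atTop)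
    (ha : SuperpolynomialDecay l ξ fun n => (a n : ℝ)⁻¹)
    (hlog : SuperpolynomialDecay l ξ fun n => (1 + log (a n)) / expSlope (ξ n))
    (hx : ∀ᶠ n in l, a n ≠ 0 ∧ 1 ≤ x n ∧ ∑ j ∈ Icc 1 (a n), x n ^ j = a n * expSlope (ξ n))
    (N : ℕ) :
    (fun n => (∑ j ∈ Icc 1 (a n), x n ^ j / j) / expSlope (ξ n)
      - a n * (x n - 1) / (a n * (x n - 1) - 1 + x n / expSlope (ξ n))
      - ∑ k ∈ Icc 2 N, ((k ! : ℝ) - 1) / ξ n ^ k) =o[l] fun n => 1 / ξ n ^ N := by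
  simp only [sum_Icc_two_factorial_sub_one_div_pow]
  refine ((sum_pow_div_sub_sum_isLittleO hξ ha hlog hx N).sub
    (div_sub_one_add_sub_sum_isLittleO hξ (superpolynomialDecay_mul_sub_one_sub hξ ha hx)
      (superpolynomialDecay_div_expSlope hξ ha hlog hx) N)).congr_left fun n => ?_
  ring

end Expansion

section Growth

variable {ι : Type*} {l : Filter ι}

lemma inv_isBigO_of_tendsto_mul_atTop {a b : ι → ℝ}
    (h : Tendsto (fun n => b n * a n) l atTop) : (fun n => (a n)⁻¹) =O[l] b := by
  refine ((isBigO_refl b l).mul (h.inv_tendsto_atTop.isBigO_one ℝ)).congr' ?_ (by simp)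
  filter_upwards [h.eventually_ne_atTop 0] with n hn
  have hb := left_ne_zero_of_mul hn
  rw [Pi.inv_apply, mul_inv, mul_inv_cancel_left₀ hb]

lemma tendsto_atTop_of_expSlope_eq {ξ u : ι → ℝ}
    (hξ : ∀ᶠ n in l, 0 < ξ n ∧ expSlope (ξ n) = u n) (hu : Tendsto u l atTop) :
    Tendsto ξ l atTop := by
  refine tendsto_atTop_mono' l ?_ (tendsto_log_atTop.comp hu)
  filter_upwards [hξ] with n ⟨hpos, heq⟩
  rw [Function.comp_apply, ← heq, log_le_iff_le_exp (one_pos.trans_le (one_le_expSlope hpos.le))]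
  exact expSlope_le_exp hpos.le

lemma isBigO_log_of_expSlope_eq {ξ u b : ι → ℝ}
    (hξ : ∀ᶠ n in l, 0 < ξ n ∧ expSlope (ξ n) = u n) (hub : ∀ᶠ n in l, u n ≤ b n) :
    ξ =O[l] fun n => log (b n) := by
  refine .of_bound 2 ?_
  filter_upwards [hξ, hub] with n ⟨hpos, heq⟩ hle
  have hexp : exp (ξ n / 2) ≤ b n := (exp_half_le_expSlope hpos.le).trans (heq.trans_le hle)
  have hlog := (le_log_iff_exp_le ((exp_pos _).trans_le hexp)).mpr hexp
  rw [norm_of_nonneg hpos.le]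
  linarith [le_norm_self (log (b n))]

lemma one_add_log_isBigO_log {a b : ι → ℝ} (ha : ∀ᶠ n in l, 1 ≤ a n ∧ a n ≤ b n)
    (hb : Tendsto b l atTop) : (fun n => 1 + log (a n)) =O[l] fun n => log (b n) := by
  refine .of_bound 2 ?_
  filter_upwards [ha, hb.eventually_ge_atTop (exp 1)] with n ⟨hone, hle⟩ hbn
  have hlog : 1 ≤ log (b n) := (le_log_iff_exp_le ((exp_pos 1).trans_le hbn)).mpr hbn
  have hmono := log_le_log (one_pos.trans_le hone) hle
  rw [norm_of_nonneg (by linarith [log_nonneg hone]), norm_of_nonneg (by linarith)]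
  linarith

lemma div_isBigO_rpow_of_tendsto {a : ℕ → ℝ} {c : ℝ}
    (h : Tendsto (fun n : ℕ => (n : ℝ) ^ (-c) * a n) atTop (𝓝 0)) :
    (fun n => a n / n) =O[atTop] fun n : ℕ => (n : ℝ) ^ (-(1 - c)) := by
  refine ((h.isBigO_one ℝ).mul (isBigO_refl (fun n : ℕ => (n : ℝ) ^ (-(1 - c))) atTop)).congr' ?_
    (by simp)
  filter_upwards [eventually_gt_atTop 0] with n hn
  have hn0 : (0 : ℝ) < n := by exact_mod_cast hn
  rw [mul_right_comm, ← rpow_add hn0, show -c + -(1 - c) = -1 by ring, rpow_neg_one,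
    inv_mul_eq_div]

lemma tendsto_div_atTop_of_tendsto {a : ℕ → ℝ} {c : ℝ} (hc : c < 1) (ha : ∀ n, 0 < a n)
    (h : Tendsto (fun n : ℕ => (n : ℝ) ^ (-c) * a n) atTop (𝓝 0)) :
    Tendsto (fun n => n / a n) atTop atTop := by
  have hzero : Tendsto (fun n => a n / n) atTop (𝓝 0) :=
    (div_isBigO_rpow_of_tendsto h).trans_tendsto
      ((tendsto_rpow_neg_atTop (sub_pos.mpr hc)).comp tendsto_natCast_atTop_atTop)
  have hpos : ∀ᶠ n : ℕ in atTop, 0 < a n / n := by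
    filter_upwards [eventually_gt_atTop 0] with n hn
    have := ha n
    positivity
  simpa [Pi.inv_def] using (tendsto_nhdsWithin_iff.mpr ⟨hzero, hpos⟩).inv_tendsto_nhdsGT_zero

lemma superpolynomialDecay_one_add_log_div {a : ℕ → ℝ} {c : ℝ} (hc : c < 1) (ha : ∀ n, 1 ≤ a n)
    (h : Tendsto (fun n : ℕ => (n : ℝ) ^ (-c) * a n) atTop (𝓝 0)) :
    SuperpolynomialDecay atTop (fun n : ℕ => log n) fun n => (1 + log (a n)) / (n / a n) := by
  have hle : ∀ᶠ n : ℕ in atTop, 1 ≤ a n ∧ a n ≤ n := by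
    filter_upwards [(tendsto_div_atTop_of_tendsto hc (fun n => one_pos.trans_le (ha n))
      h).eventually_ge_atTop 1] with n hn
    exact ⟨ha n, (one_le_div (one_pos.trans_le (ha n))).mp hn⟩
  refine superpolynomialDecay_of_isBigO
    (superpolynomialDecay_log_rpow_neg (sub_pos.mpr hc)).param_mul (isBigO_refl _ _) ?_
  refine ((one_add_log_isBigO_log hle tendsto_natCast_atTop_atTop).mul
    (div_isBigO_rpow_of_tendsto h)).congr_left fun n => ?_
  rw [div_div_eq_mul_div, mul_div_assoc]

lemma one_le_of_lt_sum_pow {a : ℕ} {x : ℝ} (hx : 0 ≤ x) (h : (a : ℝ) < ∑ j ∈ Icc 1 a, x ^ j) :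
    1 ≤ x := by
  contrapose! h
  calc ∑ j ∈ Icc 1 a, x ^ j ≤ ∑ _ ∈ Icc 1 a, (1 : ℝ) :=
        sum_le_sum fun j _ => pow_le_one₀ hx h.le
    _ = a := by simp

end Growth

lemma add_mul_div_div_eq {a n x m : ℝ} (ha : a ≠ 0) (hn : n ≠ 0) (hx : x ≠ 0) :
    m + n * ((x - 1) * x / (1 - a * (x - 1) - a * x / n)) / x =
      n / a * (m / (n / a) - a * (x - 1) / (a * (x - 1) - 1 + x / (n / a))) := by
  have hden : 1 - a * (x - 1) - a * x / n = -(a * (x - 1) - 1 + x / (n / a)) := by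
    field_simp
    ring
  rw [hden, div_neg]
  field_simp
  ring

open Filter Asymptotics in
/-- asymptotic expansion of the variance.  Assume there are
`α₀, α₁ ∈ (0,1)` with `n^{−α₀} α(n) → ∞` (i.e. the liminf is `∞`) and
`n^{−α₁} α(n) → 0` (i.e. the limsup of this nonnegative sequence is `0`).
Let `x n = x_{n,α}(1)` be the positive solution of `∑_{j=1}^{α(n)} x^j = n`,
`m n = ∑_{j=1}^{α(n)} x(n)^j / j`,
`v n = m n + n x'_{n,α}(1) / x n` with `x'_{n,α}(1)` given by its explicit
formula, and let `ξ u` be the nonzero solution of `exp ξ = 1 + u ξ` (for `u > 1`).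
Then for every `N ≥ 2`,
`v n = (n/α(n)) ∑_{k=2}^{N} (k!−1)/ξ(n/α(n))^k + o((n/α(n)) ξ(n/α(n))^{−N})`. -/
theorem stmt_2 (α : ℕ → ℕ) (hα1 : ∀ n, 1 ≤ α n)
    (α₀ α₁ : ℝ) (h₀ : α₀ ∈ Set.Ioo (0 : ℝ) 1) (h₁ : α₁ ∈ Set.Ioo (0 : ℝ) 1)
    (hlo : Tendsto (fun n : ℕ => (n : ℝ) ^ (-α₀) * α n) atTop atTop)
    (hhi : Tendsto (fun n : ℕ => (n : ℝ) ^ (-α₁) * α n) atTop (nhds 0))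
    (x : ℕ → ℝ)
    (hx : ∀ n, 1 ≤ n → 0 < x n ∧ ∑ j ∈ Finset.Icc 1 (α n), x n ^ j = (n : ℝ))
    (m v : ℕ → ℝ) (hm : ∀ n, m n = ∑ j ∈ Finset.Icc 1 (α n), x n ^ j / j)
    (hv : ∀ n, v n = m n + (n : ℝ) *
      ((x n - 1) * x n / (1 - (α n : ℝ) * (x n - 1) - (α n : ℝ) * x n / n)) / x n)
    (ξ : ℝ → ℝ) (hξ : ∀ u : ℝ, 1 < u → ξ u ≠ 0 ∧ Real.exp (ξ u) = 1 + u * ξ u)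
    (N : ℕ) (hN : 2 ≤ N) :
    (fun n : ℕ => v n - (n : ℝ) / α n *
        ∑ k ∈ Finset.Icc 2 N, ((k.factorial : ℝ) - 1) / ξ ((n : ℝ) / α n) ^ k)
      =o[atTop] fun n : ℕ => (n : ℝ) / α n / ξ ((n : ℝ) / α n) ^ N := by
  have hα_one (n : ℕ) : (1 : ℝ) ≤ α n := by exact_mod_cast hα1 n
  have hα_pos (n : ℕ) : (0 : ℝ) < α n := one_pos.trans_le (hα_one n)
  have hu := tendsto_div_atTop_of_tendsto h₁.2 hα_pos hhi
  have hu_gt := hu.eventually_gt_atTop 1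
  have hξu : ∀ᶠ n : ℕ in atTop, 0 < ξ (n / α n) ∧ expSlope (ξ (n / α n)) = n / α n :=
    hu_gt.mono fun n hn => pos_and_expSlope_eq hn (hξ _ hn).1 (hξ _ hn).2
  have hξ_top := tendsto_atTop_of_expSlope_eq hξu hu
  have hξ_log := isBigO_log_of_expSlope_eq hξu
    (.of_forall fun n => div_le_self n.cast_nonneg (hα_one n))
  have hα_inv := superpolynomialDecay_of_isBigO (superpolynomialDecay_log_rpow_neg h₀.1) hξ_log
    (inv_isBigO_of_tendsto_mul_atTop hlo)
  have hα_log := superpolynomialDecay_of_isBigO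
    (superpolynomialDecay_one_add_log_div h₁.2 hα_one hhi) hξ_log
    (EventuallyEq.div .rfl (hξu.mono fun n hn => hn.2)).isBigO
  have hx_sol : ∀ᶠ n in atTop, α n ≠ 0 ∧ 1 ≤ x n ∧
      ∑ j ∈ Icc 1 (α n), x n ^ j = α n * expSlope (ξ (n / α n)) := by
    filter_upwards [hξu, hu_gt, eventually_ge_atTop 1] with n hξn hun hn
    obtain ⟨hx_pos, hx_sum⟩ := hx n hn
    rw [hξn.2, mul_div_cancel₀ _ (hα_pos n).ne']
    exact ⟨Nat.cast_ne_zero.mp (hα_pos n).ne', one_le_of_lt_sum_pow hx_pos.le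
      (hx_sum ▸ (one_lt_div (hα_pos n)).mp hun), hx_sum⟩
  refine ((isBigO_refl (fun n : ℕ => (n : ℝ) / α n) atTop).mul_isLittleO
    (sum_pow_div_sub_div_sub_sum_isLittleO hξ_top hα_inv hα_log hx_sol N)).congr' ?_
    (.of_forall fun _ => mul_one_div _ _)
  filter_upwards [hξu, eventually_ge_atTop 1] with n hξn hn
  rw [hv, hm, add_mul_div_div_eq (hα_pos n).ne' (by positivity) (hx n hn).1.ne', hξn.2]
  ring
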